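/- Let I ⊆ ℝ be a Borel set, and regard L²(I) as the closed subspace χ_I(M)L²(ℝ) of L²(ℝ). Let E be a positive operator measure on the Borel sets of ℝ with values in the bounded operators on L²(I), satisfying the covariance condition e^{-iaM} E(B) e^{iaM} = E(B+a) for all Borel B ⊆ ℝ and all a ∈ ℝ, where e^{-iaM} denotes multiplication by x ↦ e^{-iax}. Then there exists a positive linear map Ψ from the bounded operators on L²(ℝ) to the bounded operators on L²(I) such that Ψ(f(M)* A f(M)) = f(M)* Ψ(A) f(M) for every bounded Borel function f : ℝ → ℂ and every bounded operator A on L²(ℝ), and E(B) = Ψ(F χ_B(M) F*) for every Borel set B ⊆ ℝ. -/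

import Mathlib

open MeasureTheory Complex Filter Set
open scoped ENNReal NNReal

noncomputable section

/-- `L²(ℝ)` with respect to Lebesgue measure. -/
abbrev H2 : Type := Lp ℂ 2 (volume : Measure ℝ)

/-- `𝓕` is the Fourier–Plancherel operator: a unitary on `L²(ℝ)` which is given on
`L¹ ∩ L²` by the usual integral formula `(𝓕φ)(y) = (2π)^{-1/2} ∫ e^{-iyx} φ(x) dx`, and whose
inverse `𝓕* = 𝓕⁻¹` is given on `L¹ ∩ L²` by `(𝓕*φ)(y) = (2π)^{-1/2} ∫ e^{iyx} φ(x) dx`. -/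
def IsFourier (𝓕 : H2 ≃ₗᵢ[ℂ] H2) : Prop :=
  (∀ φ : H2, Integrable (⇑φ) volume →
      (⇑(𝓕 φ) : ℝ → ℂ) =ᵐ[volume]
        fun y : ℝ => (Real.sqrt (2 * Real.pi) : ℂ)⁻¹ *
          ∫ x : ℝ, Complex.exp (-(Complex.I * y * x)) * φ x) ∧
  (∀ φ : H2, Integrable (⇑φ) volume →
      (⇑(𝓕.symm φ) : ℝ → ℂ) =ᵐ[volume]
        fun y : ℝ => (Real.sqrt (2 * Real.pi) : ℂ)⁻¹ *
          ∫ x : ℝ, Complex.exp (Complex.I * y * x) * φ x)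

/-- The multiplication operator `g(M)` on `L²`: `φ ↦ g·φ` (pointwise product), defined
whenever the product is again in `L²`. -/
def mulLp {μ : Measure ℝ} (g : ℝ → ℂ) (φ : Lp ℂ 2 μ) : Lp ℂ 2 μ := by
  classical exact if h : MemLp (fun x => g x * φ x) 2 μ then h.toLp _ else 0

/-- A positive operator measure (POM) on the Borel sets of `ℝ` with values in the bounded
operators on a Hilbert space `K`: `0 ≤ E(B) ≤ I`, `E(∅) = 0`, and `E` is σ-additive in the
strong operator topology. -/
structure POM (K : Type) [NormedAddCommGroup K] [InnerProductSpace ℂ K] [CompleteSpace K] where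
  toFun : Set ℝ → K →L[ℂ] K
  pos : ∀ B : Set ℝ, (toFun B).IsPositive
  le_one : ∀ B : Set ℝ, (ContinuousLinearMap.id ℂ K - toFun B).IsPositive
  empty : toFun ∅ = 0
  sigma_additive : ∀ f : ℕ → Set ℝ, (∀ n, MeasurableSet (f n)) →
    Pairwise (Function.onFun Disjoint f) →
    ∀ φ : K, HasSum (fun n => toFun (f n) φ) (toFun (⋃ n, f n) φ)


section helpers

open scoped InnerProductSpace Topology ComplexOrder

theorem mulLp_coe {μ : Measure ℝ} {g : ℝ → ℂ} (hg : Measurable g) {C : ℝ} (hC : ∀ x, ‖g x‖ ≤ C)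
    (φ : Lp ℂ 2 μ) : (mulLp g φ : ℝ → ℂ) =ᵐ[μ] fun x => g x * φ x := by
  have h : MemLp (fun x => g x * φ x) 2 μ := by
    refine (Lp.memLp φ).of_le_mul (c := C)
      (hg.aestronglyMeasurable.mul (Lp.aestronglyMeasurable φ)) (ae_of_all _ fun x => ?_)
    rw [norm_mul]
    exact mul_le_mul_of_nonneg_right (hC x) (norm_nonneg _)
  unfold mulLp
  rw [dif_pos h]
  exact h.coeFn_toLp

theorem inner_mulLp {μ : Measure ℝ} {g : ℝ → ℂ} (hg : Measurable g) {C : ℝ}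
    (hC : ∀ x, ‖g x‖ ≤ C) (u v : Lp ℂ 2 μ) :
    ⟪u, mulLp (fun x => starRingEnd ℂ (g x)) v⟫_ℂ = ⟪mulLp g u, v⟫_ℂ := by
  rw [L2.inner_def, L2.inner_def]
  refine integral_congr_ae ?_
  have h1 := mulLp_coe hg hC u
  have h2 := mulLp_coe (μ := μ) (g := fun x => starRingEnd ℂ (g x))
    (by fun_prop) (C := C) (fun x => by simpa using hC x) v
  filter_upwards [h1, h2] with x h1 h2
  simp only [h1, h2, RCLike.inner_apply, map_mul]
  ring

structure Good (I : Set ℝ) (Ψ : (H2 →L[ℂ] H2) →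
    (Lp ℂ 2 (volume.restrict I) →L[ℂ] Lp ℂ 2 (volume.restrict I))) : Prop where
  add : ∀ A B : H2 →L[ℂ] H2, Ψ (A + B) = Ψ A + Ψ B
  smul : ∀ (c : ℂ) (A : H2 →L[ℂ] H2), Ψ (c • A) = c • Ψ A
  pos : ∀ A : H2 →L[ℂ] H2, A.IsPositive → ∀ φ, 0 ≤ ⟪φ, Ψ A φ⟫_ℂ
  bound : ∀ A φ ψ, ‖⟪φ, Ψ A ψ⟫_ℂ‖ ≤ ‖A‖ * ‖φ‖ * ‖ψ‖
  bim : ∀ f : ℝ → ℂ, Measurable f → (∃ C : ℝ, ∀ x : ℝ, ‖f x‖ ≤ C) →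
        ∀ A Af : H2 →L[ℂ] H2,
          (∀ φ : H2,
            Af φ = mulLp (fun x => starRingEnd ℂ (f x)) (A (mulLp f φ))) →
          ∀ χ φ : Lp ℂ 2 (volume.restrict I),
            ⟪χ, Ψ Af φ⟫_ℂ = ⟪mulLp f χ, Ψ A (mulLp f φ)⟫_ℂ

theorem exists_op {K : Type*} [NormedAddCommGroup K] [InnerProductSpace ℂ K] [CompleteSpace K]
    (L : K → K → ℂ) (h1 : ∀ x y z, L (x + y) z = L x z + L y z)
    (h2 : ∀ (c : ℂ) x z, L (c • x) z = starRingEnd ℂ c * L x z)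
    (h3 : ∀ x y z, L x (y + z) = L x y + L x z)
    (h4 : ∀ (c : ℂ) x z, L x (c • z) = c * L x z)
    (C : ℝ) (h5 : ∀ x y, ‖L x y‖ ≤ C * ‖x‖ * ‖y‖) :
    ∃ T : K →L[ℂ] K, ∀ x y, ⟪x, T y⟫_ℂ = L x y := by
  let B : K →L⋆[ℂ] K →L[ℂ] ℂ := LinearMap.mkContinuous₂
    (LinearMap.mk₂'ₛₗ (starRingEnd ℂ) (RingHom.id ℂ) L h1 h2 h3 h4) C h5
  refine ⟨ContinuousLinearMap.adjoint (InnerProductSpace.continuousLinearMapOfBilin B),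
    fun x y => ?_⟩
  rw [ContinuousLinearMap.adjoint_inner_right, InnerProductSpace.continuousLinearMapOfBilin_apply]
  rfl

theorem good_closure {I : Set ℝ} {ι : Type*} (l : Filter ι) [NeBot l]
    (Φ : ι → (H2 →L[ℂ] H2) →
      (Lp ℂ 2 (volume.restrict I) →L[ℂ] Lp ℂ 2 (volume.restrict I)))
    (hΦ : ∀ i, Good I (Φ i)) :
    ∃ Ψ, Good I Ψ ∧ ∀ A φ c, Tendsto (fun i => ⟪φ, Φ i A φ⟫_ℂ) l (𝓝 c) → ⟪φ, Ψ A φ⟫_ℂ = c := by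
  let u := Ultrafilter.of l
  have hu : (u : Filter ι) ≤ l := Ultrafilter.of_le l
  have lim : ∀ A φ ψ, ∃ c : ℂ, ‖c‖ ≤ ‖A‖ * ‖φ‖ * ‖ψ‖ ∧
      Tendsto (fun i => ⟪φ, Φ i A ψ⟫_ℂ) u (𝓝 c) := by
    intro A φ ψ
    obtain ⟨c, hc, h⟩ := (isCompact_closedBall (0 : ℂ) (‖A‖ * ‖φ‖ * ‖ψ‖)).ultrafilter_le_nhds'
      (u.map (fun i => ⟪φ, Φ i A ψ⟫_ℂ)) (by
        refine Filter.univ_mem' (f := (u : Filter ι)) fun i => ?_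
        simpa using (hΦ i).bound A φ ψ)
    exact ⟨c, by simpa using hc, h⟩
  choose L hL hT using lim
  have key : ∀ A, ∃ T : Lp ℂ 2 (volume.restrict I) →L[ℂ] Lp ℂ 2 (volume.restrict I),
      ∀ x y, ⟪x, T y⟫_ℂ = L A x y := by
    intro A
    refine exists_op (L A) ?_ ?_ ?_ ?_ ‖A‖ (hL A)
    · intro x y z
      refine tendsto_nhds_unique (hT A _ _) ?_
      simpa only [inner_add_left] using (hT A x z).add (hT A y z)
    · intro c x z
      refine tendsto_nhds_unique (hT A _ _) ?_
      simpa only [inner_smul_left] using (hT A x z).const_mul _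
    · intro x y z
      refine tendsto_nhds_unique (hT A _ _) ?_
      simpa only [map_add, inner_add_right] using (hT A x y).add (hT A x z)
    · intro c x z
      refine tendsto_nhds_unique (hT A _ _) ?_
      simpa only [map_smul, inner_smul_right] using (hT A x z).const_mul _
  choose Ψ hΨ using key
  refine ⟨Ψ, ⟨?_, ?_, ?_, ?_, ?_⟩, ?_⟩
  · intro A B
    ext1 y
    refine ext_inner_left ℂ fun x => ?_
    rw [hΨ, _root_.add_apply, inner_add_right, hΨ, hΨ]
    refine tendsto_nhds_unique (hT _ _ _) ?_
    simpa only [(hΦ _).add, _root_.add_apply, inner_add_right] using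
      (hT A x y).add (hT B x y)
  · intro c A
    ext1 y
    refine ext_inner_left ℂ fun x => ?_
    rw [hΨ, _root_.smul_apply, inner_smul_right, hΨ]
    refine tendsto_nhds_unique (hT _ _ _) ?_
    simpa only [(hΦ _).smul, _root_.smul_apply, inner_smul_right] using
      (hT A x y).const_mul c
  · intro A hA φ
    rw [hΨ]
    have := hT A φ φ
    rw [Complex.nonneg_iff]
    refine ⟨ge_of_tendsto ((Complex.continuous_re.tendsto _).comp this)
      (Eventually.of_forall fun i => (Complex.nonneg_iff.1 ((hΦ i).pos A hA φ)).1), ?_⟩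
    refine tendsto_nhds_unique ?_ ((Complex.continuous_im.tendsto _).comp this)
    refine tendsto_const_nhds.congr fun i => ?_
    exact (Complex.nonneg_iff.1 ((hΦ i).pos A hA φ)).2
  · intro A x y
    rw [hΨ]; exact hL A x y
  · intro f hf hb A Af h χ φ
    rw [hΨ, hΨ]
    refine tendsto_nhds_unique (hT _ _ _) ?_
    refine (hT A _ _).congr fun i => ?_
    rw [(hΦ i).bim f hf hb A Af h]
  · intro A φ c h
    rw [hΨ]
    exact tendsto_nhds_unique (hT A φ φ) (h.mono_left hu)

theorem good_sum {I : Set ℝ} {ι : Type*} (s : Finset ι)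
    (G : ι → Lp ℂ 2 (volume.restrict I) →L[ℂ] H2)
    (hG : ∀ j, ∀ f : ℝ → ℂ, Measurable f → (∃ C : ℝ, ∀ x : ℝ, ‖f x‖ ≤ C) →
      ∀ φ, G j (mulLp f φ) = mulLp f (G j φ))
    (hb : ∀ φ, ∑ j ∈ s, ‖G j φ‖ ^ 2 ≤ ‖φ‖ ^ 2) :
    ∃ Ψ, Good I Ψ ∧ ∀ A φ, ⟪φ, Ψ A φ⟫_ℂ = ∑ j ∈ s, ⟪G j φ, A (G j φ)⟫_ℂ := by
  let Ψ : (H2 →L[ℂ] H2) →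
    (Lp ℂ 2 (volume.restrict I) →L[ℂ] Lp ℂ 2 (volume.restrict I)) :=
    fun A => ∑ j ∈ s, (ContinuousLinearMap.adjoint (G j)).comp (A.comp (G j))
  have hΨ : ∀ A φ ψ, ⟪φ, Ψ A ψ⟫_ℂ = ∑ j ∈ s, ⟪G j φ, A (G j ψ)⟫_ℂ := by
    intro A φ ψ
    simp only [Ψ, _root_.sum_apply, inner_sum, ContinuousLinearMap.comp_apply,
      ContinuousLinearMap.adjoint_inner_right]
  refine ⟨Ψ, ⟨?_, ?_, ?_, ?_, ?_⟩, fun A φ => hΨ A φ φ⟩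
  · intro A B
    ext1 y
    refine ext_inner_left ℂ fun x => ?_
    simp only [_root_.add_apply, inner_add_right, hΨ, Finset.sum_add_distrib]
  · intro c A
    ext1 y
    refine ext_inner_left ℂ fun x => ?_
    simp only [_root_.smul_apply, inner_smul_right, hΨ, Finset.mul_sum]
  · intro A hA φ
    rw [hΨ]
    exact Finset.sum_nonneg fun j _ => hA.inner_nonneg_right _
  · intro A φ ψ
    rw [hΨ]
    calc ‖∑ j ∈ s, ⟪G j φ, A (G j ψ)⟫_ℂ‖ ≤ ∑ j ∈ s, ‖⟪G j φ, A (G j ψ)⟫_ℂ‖ := norm_sum_le _ _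
      _ ≤ ∑ j ∈ s, ‖A‖ * (‖G j φ‖ * ‖G j ψ‖) := by
          refine Finset.sum_le_sum fun j _ => ?_
          refine (norm_inner_le_norm _ _).trans ?_
          have := A.le_opNorm (G j ψ)
          nlinarith [norm_nonneg (G j φ)]
      _ = ‖A‖ * ∑ j ∈ s, (‖G j φ‖ * ‖G j ψ‖) := by rw [Finset.mul_sum]
      _ ≤ ‖A‖ * (√(∑ j ∈ s, ‖G j φ‖ ^ 2) * √(∑ j ∈ s, ‖G j ψ‖ ^ 2)) := by
          gcongr
          exact Real.sum_mul_le_sqrt_mul_sqrt _ _ _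
      _ ≤ ‖A‖ * (‖φ‖ * ‖ψ‖) := by
          gcongr
          · exact Real.sqrt_le_left (norm_nonneg _) |>.2 (hb φ)
          · exact Real.sqrt_le_left (norm_nonneg _) |>.2 (hb ψ)
      _ = _ := by ring
  · intro f hf hbf A Af h χ φ
    rw [hΨ, hΨ]
    refine Finset.sum_congr rfl fun j _ => ?_
    obtain ⟨C, hC⟩ := hbf
    rw [hG j f hf ⟨C, hC⟩, hG j f hf ⟨C, hC⟩, h, inner_mulLp hf hC]

theorem normsq_L2 {μ : Measure ℝ} (f : Lp ℂ 2 μ) : ‖f‖ ^ 2 = ∫ x, ‖f x‖ ^ 2 ∂μ := by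
  have h := inner_self_eq_norm_sq_to_K (𝕜 := ℂ) f
  rw [L2.inner_def] at h
  have h2 : (((∫ x, ‖f x‖ ^ 2 ∂μ : ℝ)) : ℂ) = ((‖f‖ ^ 2 : ℝ) : ℂ) := by
    rw [← integral_complex_ofReal]
    push_cast
    refine Eq.trans (integral_congr_ae (ae_of_all _ fun x => ?_)) h
    exact (inner_self_eq_norm_sq_to_K (𝕜 := ℂ) (f x)).symm
  exact_mod_cast h2.symm

theorem enormsq_L2 {μ : Measure ℝ} (f : Lp ℂ 2 μ) : ‖f‖ₑ ^ 2 = ∫⁻ x, ‖f x‖ₑ ^ 2 ∂μ := by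
  rw [Lp.enorm_def]
  have := eLpNorm_nnreal_pow_eq_lintegral (μ := μ) (f := (f : ℝ → ℂ)) (p := 2) (by norm_num)
  simpa using this

def Um {μ : Measure ℝ} (a : ℝ) (φ : Lp ℂ 2 μ) : Lp ℂ 2 μ :=
  mulLp (fun x => Complex.exp (Complex.I * a * x)) φ

theorem norm_expI (a x : ℝ) : ‖Complex.exp (Complex.I * a * x)‖ = 1 := by
  have : Complex.I * a * x = ((a * x : ℝ) : ℂ) * Complex.I := by push_cast; ring
  rw [this, Complex.norm_exp_ofReal_mul_I]

theorem Um_coe {μ : Measure ℝ} (a : ℝ) (φ : Lp ℂ 2 μ) :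
    (Um a φ : ℝ → ℂ) =ᵐ[μ] fun x => Complex.exp (Complex.I * a * x) * φ x :=
  mulLp_coe (by fun_prop) (C := 1) (fun x => (norm_expI a x).le) φ

theorem Um_zero {μ : Measure ℝ} (φ : Lp ℂ 2 μ) : Um 0 φ = φ := by
  refine Lp.ext ?_
  filter_upwards [Um_coe 0 φ] with x hx
  simp [hx]

theorem Um_continuous {μ : Measure ℝ} (φ : Lp ℂ 2 μ) : Continuous (fun a => Um a φ) := by
  rw [continuous_iff_continuousAt]
  intro b
  rw [ContinuousAt, tendsto_iff_norm_sub_tendsto_zero]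
  have hsq : ∀ a, ‖Um a φ - Um b φ‖ ^ 2 = ∫ x, ‖Complex.exp (Complex.I * a * x) * φ x -
      Complex.exp (Complex.I * b * x) * φ x‖ ^ 2 ∂μ := by
    intro a
    rw [normsq_L2]
    refine integral_congr_ae ?_
    filter_upwards [Um_coe a φ, Um_coe b φ, Lp.coeFn_sub (Um a φ) (Um b φ)] with x h1 h2 h3
    simp only [h3, Pi.sub_apply, h1, h2]
  have hlim : Tendsto (fun a => ‖Um a φ - Um b φ‖ ^ 2) (𝓝 b) (𝓝 0) := by
    simp only [hsq]
    have h0 : (0 : ℝ) = ∫ x, ‖Complex.exp (Complex.I * b * x) * φ x -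
      Complex.exp (Complex.I * b * x) * φ x‖ ^ 2 ∂μ := by simp
    rw [h0]
    have hint : Integrable (fun x => 4 * ‖φ x‖ ^ 2) μ :=
      ((Lp.memLp φ).integrable_norm_pow (by norm_num)).const_mul 4
    refine tendsto_integral_filter_of_dominated_convergence (fun x => 4 * ‖φ x‖ ^ 2) ?_ ?_ hint ?_
    · refine Eventually.of_forall fun a => ?_
      have hm : AEStronglyMeasurable (φ : ℝ → ℂ) μ := Lp.aestronglyMeasurable φ
      have h1 : ∀ a : ℝ, AEStronglyMeasurable (fun x : ℝ => Complex.exp (Complex.I * a * x)) μ :=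
        fun a => (by fun_prop : Continuous fun x : ℝ =>
          Complex.exp (Complex.I * a * x)).aestronglyMeasurable
      exact ((((h1 a).mul hm).sub ((h1 b).mul hm)).norm.pow 2)
    · refine Eventually.of_forall fun a => ae_of_all _ fun x => ?_
      rw [Real.norm_of_nonneg (by positivity)]
      have := norm_sub_le (Complex.exp (Complex.I * a * x) * φ x)
        (Complex.exp (Complex.I * b * x) * φ x)
      rw [norm_mul, norm_mul, norm_expI, norm_expI] at this
      nlinarith [norm_nonneg (Complex.exp (Complex.I * a * x) * φ x -
        Complex.exp (Complex.I * b * x) * φ x), norm_nonneg (φ x)]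
    · refine ae_of_all _ fun x => ?_
      have : Continuous fun a : ℝ => ‖Complex.exp (Complex.I * a * x) * φ x -
        Complex.exp (Complex.I * b * x) * φ x‖ ^ 2 := by fun_prop
      exact this.tendsto b
  have := hlim.sqrt
  simpa using this

section pom
variable {K : Type} [NormedAddCommGroup K] [InnerProductSpace ℂ K] [CompleteSpace K]

theorem pom_inner (E : POM K) (B : Set ℝ) (φ : K) :
    ⟪φ, E.toFun B φ⟫_ℂ = ((⟪φ, E.toFun B φ⟫_ℂ).re : ℂ) ∧ 0 ≤ (⟪φ, E.toFun B φ⟫_ℂ).re := by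
  have h := Complex.nonneg_iff.1 ((E.pos B).inner_nonneg_right φ)
  exact ⟨Complex.ext (by simp) (by simp [← h.2]), h.1⟩

def muE (E : POM K) (φ : K) : Measure ℝ :=
  Measure.ofMeasurable (fun B _ => ENNReal.ofReal (⟪φ, E.toFun B φ⟫_ℂ).re)
    (by simp [E.empty]) (by
      intro f hf hd
      have h := E.sigma_additive f hf hd φ
      have h2 : HasSum (fun n => (⟪φ, E.toFun (f n) φ⟫_ℂ).re) (⟪φ, E.toFun (⋃ n, f n) φ⟫_ℂ).re :=
        Complex.hasSum_re (h.mapL (innerSL ℂ φ))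
      rw [← h2.tsum_eq, ENNReal.ofReal_tsum_of_nonneg (fun n => (pom_inner E _ φ).2) h2.summable])

theorem muE_apply (E : POM K) (φ : K) {B : Set ℝ} (hB : MeasurableSet B) :
    muE E φ B = ENNReal.ofReal (⟪φ, E.toFun B φ⟫_ℂ).re :=
  Measure.ofMeasurable_apply B hB

theorem muE_le (E : POM K) (φ : K) (B : Set ℝ) : muE E φ B ≤ ‖φ‖ₑ ^ 2 := by
  refine (measure_mono (subset_univ B)).trans ?_
  rw [muE_apply E φ MeasurableSet.univ]
  have h := (Complex.nonneg_iff.1 ((E.le_one univ).inner_nonneg_right φ)).1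
  simp only [_root_.sub_apply, ContinuousLinearMap.id_apply, inner_sub_right, Complex.sub_re] at h
  have h2 : (⟪φ, φ⟫_ℂ).re = ‖φ‖ ^ 2 := inner_self_eq_norm_sq (𝕜 := ℂ) φ
  rw [← ofReal_norm, ← ENNReal.ofReal_pow (norm_nonneg _)]
  exact ENNReal.ofReal_le_ofReal (by linarith)

instance (E : POM K) (φ : K) : IsFiniteMeasure (muE E φ) :=
  ⟨(muE_le E φ univ).trans_lt (by simp)⟩

end pom

theorem tonelli_aux (μ : Measure ℝ) [IsFiniteMeasure μ] {B C : Set ℝ} (hB : MeasurableSet B)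
    (hC : MeasurableSet C) :
    ∫⁻ a in B, μ ((· + a) '' C) =
      ∫⁻ t, (∫⁻ a, B.indicator (fun _ => (1 : ℝ≥0∞)) a * C.indicator (fun _ => 1) (t - a)) ∂μ := by
  have hm1 : Measurable (B.indicator (fun _ => (1 : ℝ≥0∞))) := measurable_const.indicator hB
  have hm2 : Measurable (C.indicator (fun _ => (1 : ℝ≥0∞))) := measurable_const.indicator hC
  rw [← lintegral_indicator hB, lintegral_lintegral_swap]
  · refine lintegral_congr fun a => ?_
    rw [lintegral_const_mul _ (by fun_prop)]
    have h1 : (· + a) '' C = (fun t => t - a) ⁻¹' C := by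
      ext t; simp [sub_eq_add_neg]
    have h2 : (fun t : ℝ => C.indicator (fun _ => (1 : ℝ≥0∞)) (t - a)) =
      ((fun t => t - a) ⁻¹' C).indicator (fun _ => 1) := by
      ext t; rfl
    rw [h2, lintegral_indicator_const (hC.preimage (by fun_prop)), ← h1]
    by_cases ha : a ∈ B <;> simp [ha]
  · exact ((hm1.comp measurable_snd).mul
      (hm2.comp (measurable_fst.sub measurable_snd))).aemeasurable

theorem tonelli_shift (μ : Measure ℝ) [IsFiniteMeasure μ] {B C : Set ℝ} (hB : MeasurableSet B)
    (hC : MeasurableSet C) :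
    ∫⁻ a in B, μ ((· + a) '' C) = ∫⁻ s in C, μ ((· + s) '' B) := by
  rw [tonelli_aux μ hB hC, tonelli_aux μ hC hB]
  refine lintegral_congr fun t => ?_
  rw [← lintegral_sub_left_eq_self _ t]
  simp only [sub_sub_cancel, mul_comm]

theorem ext_ae {I : Set ℝ} (hI : MeasurableSet I) {f g : ℝ → ℂ} (h : f =ᵐ[volume.restrict I] g) :
    I.indicator f =ᵐ[volume] I.indicator g := by
  have := (ae_restrict_iff' hI).1 h
  filter_upwards [this] with x hx
  by_cases hxI : x ∈ I
  · simp [hxI, hx hxI]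
  · simp [hxI]

theorem exists_G {I : Set ℝ} (hI : MeasurableSet I) (h : Lp ℂ 2 (volume.restrict I)) (C : ℝ)
    (hC : ∀ᵐ x ∂(volume.restrict I), ‖h x‖ ≤ C) :
    ∃ G : Lp ℂ 2 (volume.restrict I) →L[ℂ] H2, ∀ φ,
      (G φ : ℝ → ℂ) =ᵐ[volume] I.indicator (fun x => starRingEnd ℂ (h x) * φ x) := by
  have hmem0 : ∀ φ : Lp ℂ 2 (volume.restrict I),
      MemLp (fun x => starRingEnd ℂ (h x) * φ x) 2 (volume.restrict I) ∧
      eLpNorm (fun x => starRingEnd ℂ (h x) * φ x) 2 (volume.restrict I) ≤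
        ENNReal.ofReal C * eLpNorm φ 2 (volume.restrict I) := by
    intro φ
    have hb : ∀ᵐ x ∂(volume.restrict I), ‖starRingEnd ℂ (h x) * φ x‖ ≤ C * ‖φ x‖ := by
      filter_upwards [hC] with x hx
      rw [norm_mul, RCLike.norm_conj]
      exact mul_le_mul_of_nonneg_right hx (norm_nonneg _)
    have hm : AEStronglyMeasurable (fun x => starRingEnd ℂ (h x) * φ x) (volume.restrict I) :=
      (Complex.continuous_conj.comp_aestronglyMeasurable (Lp.aestronglyMeasurable h)).mul
        (Lp.aestronglyMeasurable φ)
    exact ⟨(Lp.memLp φ).of_le_mul hm hb, eLpNorm_le_mul_eLpNorm_of_ae_le_mul hb 2⟩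
  have hmem : ∀ φ : Lp ℂ 2 (volume.restrict I),
      MemLp (I.indicator (fun x => starRingEnd ℂ (h x) * φ x)) 2 volume := fun φ =>
    (memLp_indicator_iff_restrict hI).2 (hmem0 φ).1
  let L : Lp ℂ 2 (volume.restrict I) →ₗ[ℂ] H2 :=
    { toFun := fun φ => (hmem φ).toLp _
      map_add' := by
        intro φ ψ
        rw [← MemLp.toLp_add]
        refine MemLp.toLp_congr _ _ ?_
        rw [← indicator_add']
        refine ext_ae hI ?_
        filter_upwards [Lp.coeFn_add φ ψ] with x hx
        simp only [hx, Pi.add_apply, mul_add]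
      map_smul' := by
        intro c φ
        rw [RingHom.id_apply, ← MemLp.toLp_const_smul]
        refine MemLp.toLp_congr _ _ ?_
        have hs : c • I.indicator (fun x => starRingEnd ℂ (h x) * φ x) =
            I.indicator (fun x => c • (starRingEnd ℂ (h x) * φ x)) :=
          (indicator_const_smul I c (fun x => starRingEnd ℂ (h x) * φ x)).symm
        rw [hs]
        refine ext_ae hI ?_
        filter_upwards [Lp.coeFn_smul c φ] with x hx
        simp only [hx, Pi.smul_apply, smul_eq_mul]
        ring }
  refine ⟨L.mkContinuous (max C 0) ?_, fun φ => (hmem φ).coeFn_toLp⟩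
  intro φ
  change ‖(hmem φ).toLp _‖ ≤ _
  rw [Lp.norm_toLp, eLpNorm_indicator_eq_eLpNorm_restrict hI, Lp.norm_def]
  refine (ENNReal.toReal_mono ?_ (hmem0 φ).2).trans ?_
  · exact ENNReal.mul_ne_top ENNReal.ofReal_ne_top (Lp.eLpNorm_ne_top φ)
  · rw [ENNReal.toReal_mul, ENNReal.toReal_ofReal']

theorem G_comm {I : Set ℝ} (hI : MeasurableSet I) (h : Lp ℂ 2 (volume.restrict I))
    (G : Lp ℂ 2 (volume.restrict I) →L[ℂ] H2)
    (hG : ∀ φ, (G φ : ℝ → ℂ) =ᵐ[volume] I.indicator (fun x => starRingEnd ℂ (h x) * φ x))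
    (f : ℝ → ℂ) (hf : Measurable f) (hb : ∃ C : ℝ, ∀ x : ℝ, ‖f x‖ ≤ C)
    (φ : Lp ℂ 2 (volume.restrict I)) : G (mulLp f φ) = mulLp f (G φ) := by
  obtain ⟨C, hC⟩ := hb
  refine Lp.ext ?_
  have h1 : I.indicator (fun x => starRingEnd ℂ (h x) * mulLp f φ x) =ᵐ[volume]
      I.indicator (fun x => starRingEnd ℂ (h x) * (f x * φ x)) := by
    refine ext_ae hI ?_
    filter_upwards [mulLp_coe hf hC φ] with x hx
    simp only [hx]
  filter_upwards [hG (mulLp f φ), mulLp_coe hf hC (G φ), hG φ, h1] with x h2 h3 h4 h5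
  rw [h2, h5, h3, h4]
  by_cases hx : x ∈ I
  · simp only [indicator_of_mem hx]; ring
  · simp [hx]

theorem fourier_u {I : Set ℝ} (hI : MeasurableSet I) {𝓕 : H2 ≃ₗᵢ[ℂ] H2} (h𝓕 : IsFourier 𝓕)
    (h φ : Lp ℂ 2 (volume.restrict I)) (u : H2)
    (hu : (u : ℝ → ℂ) =ᵐ[volume] I.indicator (fun x => starRingEnd ℂ (h x) * φ x)) :
    (𝓕.symm u : ℝ → ℂ) =ᵐ[volume] fun a => (Real.sqrt (2 * Real.pi) : ℂ)⁻¹ * ⟪h, Um a φ⟫_ℂ := by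
  have hint : Integrable (fun x => starRingEnd ℂ (h x) * φ x) (volume.restrict I) := by
    have := L2.integrable_inner (𝕜 := ℂ) h φ
    refine this.congr (ae_of_all _ fun x => ?_)
    simp [RCLike.inner_apply, mul_comm]
  have hui : Integrable (u : ℝ → ℂ) volume :=
    ((integrable_indicator_iff hI).2 hint).congr hu.symm
  filter_upwards [h𝓕.2 u hui] with a ha
  rw [ha]
  congr 1
  rw [L2.inner_def]
  have h1 : ∀ᵐ x : ℝ, Complex.exp (Complex.I * a * x) * u x =
      I.indicator (fun x => Complex.exp (Complex.I * a * x) * (starRingEnd ℂ (h x) * φ x)) x := by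
    filter_upwards [hu] with x hx
    rw [hx]
    by_cases hxI : x ∈ I <;> simp [hxI]
  rw [integral_congr_ae h1, integral_indicator hI]
  refine integral_congr_ae ?_
  filter_upwards [Um_coe a φ] with x hx
  simp only [hx, RCLike.inner_apply]
  ring

theorem lint_symm {I : Set ℝ} (hI : MeasurableSet I) {𝓕 : H2 ≃ₗᵢ[ℂ] H2} (h𝓕 : IsFourier 𝓕)
    (h φ : Lp ℂ 2 (volume.restrict I)) (u : H2)
    (hu : (u : ℝ → ℂ) =ᵐ[volume] I.indicator (fun x => starRingEnd ℂ (h x) * φ x)) (B : Set ℝ) :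
    ∫⁻ a in B, ‖𝓕.symm u a‖ₑ ^ 2 =
      ∫⁻ a in B, ENNReal.ofReal (2 * Real.pi)⁻¹ * ‖⟪h, Um a φ⟫_ℂ‖ₑ ^ 2 := by
  refine lintegral_congr_ae (ae_restrict_of_ae ?_)
  filter_upwards [fourier_u hI h𝓕 h φ u hu] with a ha
  rw [ha, enorm_mul, mul_pow]
  congr 1
  rw [← ofReal_norm, ← ENNReal.ofReal_pow (norm_nonneg _)]
  congr 1
  rw [norm_inv, inv_pow, Complex.norm_real, Real.norm_of_nonneg (Real.sqrt_nonneg _),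
    Real.sq_sqrt (by positivity)]

theorem inner_A {𝓕 : H2 ≃ₗᵢ[ℂ] H2} (u : H2) {B : Set ℝ} (hB : MeasurableSet B)
    (A : H2 →L[ℂ] H2)
    (hA : ∀ φ : H2, A φ = 𝓕 (mulLp (Set.indicator B fun _ => (1 : ℂ)) (𝓕.symm φ))) :
    ⟪u, A u⟫_ℂ = ((∫⁻ a in B, ‖𝓕.symm u a‖ₑ ^ 2).toReal : ℂ) := by
  set w := 𝓕.symm u with hw
  have hu : u = 𝓕 w := by simp [hw]
  rw [hA, ← hw, hu, LinearIsometryEquiv.inner_map_map, L2.inner_def]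
  have h1 : ∫⁻ a in B, ‖w a‖ₑ ^ 2 = ∫⁻ a, ENNReal.ofReal (B.indicator (fun a => ‖w a‖ ^ 2) a) := by
    rw [← lintegral_indicator hB]
    refine lintegral_congr fun a => ?_
    by_cases ha : a ∈ B
    · simp [ha, ENNReal.ofReal_pow]
    · simp [ha]
  have hm : Measurable (B.indicator fun _ => (1 : ℂ)) := measurable_const.indicator hB
  have hwm : AEStronglyMeasurable (w : ℝ → ℂ) volume := Lp.aestronglyMeasurable w
  rw [h1, ← integral_eq_lintegral_of_nonneg_ae, ← integral_complex_ofReal]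
  · refine integral_congr_ae ?_
    filter_upwards [mulLp_coe hm (C := 1) (fun x => by
      by_cases hx : x ∈ B <;> simp [hx]) w] with x hx
    rw [hx]
    by_cases hxB : x ∈ B
    · simp only [indicator_of_mem hxB, one_mul]
      rw [inner_self_eq_norm_sq_to_K]
      push_cast; rfl
    · simp [hxB]
  · exact ae_of_all _ fun x => indicator_nonneg (fun _ _ => by positivity) _
  · exact (hwm.norm.pow 2).indicator hB

theorem bdd_of_plancherel {I : Set ℝ} (hI : MeasurableSet I) {𝓕 : H2 ≃ₗᵢ[ℂ] H2}
    (h𝓕 : IsFourier 𝓕) (h : Lp ℂ 2 (volume.restrict I))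
    (hb : ∀ φ, ∫⁻ a, ENNReal.ofReal (2 * Real.pi)⁻¹ * ‖⟪h, Um a φ⟫_ℂ‖ₑ ^ 2 ≤ ‖φ‖ₑ ^ 2) :
    ∀ᵐ x ∂(volume.restrict I), ‖h x‖ ≤ 1 := by
  have key : (fun x => ‖h x‖ₑ ^ 2) ≤ᵐ[volume.restrict I] fun _ => (1 : ℝ≥0∞) := by
    refine ae_le_of_forall_setLIntegral_le_of_sigmaFinite₀ ?_ ?_
    · exact ((Lp.aestronglyMeasurable h).enorm.pow_const 2)
    intro S hS hSf
    let φ : Lp ℂ 2 (volume.restrict I) := indicatorConstLp 2 hS hSf.ne (1 : ℂ)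
    have hφ : (φ : ℝ → ℂ) =ᵐ[volume.restrict I] S.indicator fun _ => (1 : ℂ) :=
      indicatorConstLp_coeFn
    have hae : (fun x => starRingEnd ℂ (h x) * φ x) =ᵐ[volume.restrict I]
        S.indicator (fun x => starRingEnd ℂ (h x)) := by
      filter_upwards [hφ] with x hx
      rw [hx]
      by_cases hxS : x ∈ S <;> simp [hxS]
    have hmem0 : MemLp (fun x => starRingEnd ℂ (h x) * φ x) 2 (volume.restrict I) :=
      ((Lp.memLp h).star.indicator hS).ae_eq hae.symm
    have hmem : MemLp (I.indicator (fun x => starRingEnd ℂ (h x) * φ x)) 2 volume :=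
      (memLp_indicator_iff_restrict hI).2 hmem0
    have h1 := lint_symm hI h𝓕 h φ (hmem.toLp _) hmem.coeFn_toLp univ
    simp only [Measure.restrict_univ] at h1
    have h2 := hb φ
    rw [← h1, ← enormsq_L2, LinearIsometryEquiv.enorm_map, enormsq_L2, enormsq_L2] at h2
    have h3 : ∫⁻ x, ‖hmem.toLp _ x‖ₑ ^ 2 = ∫⁻ x in S, ‖h x‖ₑ ^ 2 ∂(volume.restrict I) := by
      have e1 : ∀ᵐ x, ‖hmem.toLp _ x‖ₑ ^ 2 =
          I.indicator (fun x => ‖starRingEnd ℂ (h x) * φ x‖ₑ ^ 2) x := by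
        filter_upwards [hmem.coeFn_toLp] with x hx
        rw [hx]
        by_cases hxI : x ∈ I <;> simp [hxI]
      rw [lintegral_congr_ae e1, lintegral_indicator hI, ← lintegral_indicator hS]
      refine lintegral_congr_ae ?_
      filter_upwards [hae] with x hx
      rw [hx]
      by_cases hxS : x ∈ S
      · simp only [indicator_of_mem hxS, ← ofReal_norm, RCLike.norm_conj]
      · simp [hxS]
    have h4 : ∫⁻ x, ‖φ x‖ₑ ^ 2 ∂(volume.restrict I) = ∫⁻ x in S, 1 ∂(volume.restrict I) := by
      rw [← lintegral_indicator hS]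
      refine lintegral_congr_ae ?_
      filter_upwards [hφ] with x hx
      rw [hx]
      by_cases hxS : x ∈ S <;> simp [hxS]
    rw [h3, h4] at h2
    exact h2
  filter_upwards [key] with x hx
  have hx' : ‖h x‖ₑ ^ 2 ≤ 1 := hx
  rw [← ofReal_norm, ← ENNReal.ofReal_pow (norm_nonneg _), ENNReal.ofReal_le_one] at hx'
  nlinarith [norm_nonneg (h x)]

theorem exists_countable_basis (K : Type) [NormedAddCommGroup K] [InnerProductSpace ℂ K]
    [CompleteSpace K] [SecondCountableTopology K] :
    ∃ (w : Set K) (_ : HilbertBasis w ℂ K), Countable w := by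
  obtain ⟨w, b, hb⟩ := exists_hilbertBasis ℂ K
  refine ⟨w, b, ?_⟩
  have ho := b.orthonormal
  have hd : ∀ i j : w, i ≠ j → 1 ≤ dist (b i) (b j) := by
    intro i j hij
    rw [dist_eq_norm]
    have h := norm_sub_sq (𝕜 := ℂ) (b i) (b j)
    rw [ho.1 i, ho.1 j, ho.2 hij] at h
    simp at h
    nlinarith [norm_nonneg (b i - b j)]
  refine Set.countable_univ_iff.1 (Set.PairwiseDisjoint.countable_of_isOpen
    (s := fun i : w => Metric.ball (b i) (1 / 2)) (a := univ) ?_ (fun i _ => Metric.isOpen_ball)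
    (fun i _ => ⟨b i, Metric.mem_ball_self (by norm_num)⟩))
  intro i _ j _ hij
  refine Metric.ball_disjoint_ball ?_
  have := hd i j hij
  linarith

theorem parseval_tsum {K : Type} [NormedAddCommGroup K] [InnerProductSpace ℂ K]
    [CompleteSpace K] {ι : Type*} (b : HilbertBasis ι ℂ K) (x : K) :
    ∑' j, ‖⟪b j, x⟫_ℂ‖ₑ ^ 2 = ‖x‖ₑ ^ 2 := by
  have h := b.hasSum_inner_mul_inner x x
  have h2 : HasSum (fun j => ‖⟪b j, x⟫_ℂ‖ ^ 2) (‖x‖ ^ 2) := by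
    have h3 := Complex.hasSum_re h
    have e : (⟪x, x⟫_ℂ).re = ‖x‖ ^ 2 := inner_self_eq_norm_sq (𝕜 := ℂ) x
    rw [e] at h3
    refine h3.congr_fun fun j => ?_
    rw [← inner_conj_symm x (b j), RCLike.conj_mul]
    norm_cast
  rw [← ofReal_norm, ← ENNReal.ofReal_pow (norm_nonneg _), ← h2.tsum_eq,
    ENNReal.ofReal_tsum_of_nonneg (fun _ => by positivity) h2.summable]
  refine tsum_congr fun j => ?_
  rw [← ofReal_norm, ← ENNReal.ofReal_pow (norm_nonneg _)]

theorem exists_sqrt {K : Type} [NormedAddCommGroup K] [InnerProductSpace ℂ K]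
    [CompleteSpace K] (T : K →L[ℂ] K) (hT : T.IsPositive) :
    ∃ S : K →L[ℂ] K, (∀ x y, ⟪S x, y⟫_ℂ = ⟪x, S y⟫_ℂ) ∧ ∀ x, ⟪x, T x⟫_ℂ = ⟪S x, S x⟫_ℂ := by
  have hT0 : 0 ≤ T := (ContinuousLinearMap.nonneg_iff_isPositive T).2 hT
  have hs : (CFC.sqrt T).IsPositive :=
    (ContinuousLinearMap.nonneg_iff_isPositive _).1 (CFC.sqrt_nonneg T)
  have hsym : ∀ x y, ⟪CFC.sqrt T x, y⟫_ℂ = ⟪x, CFC.sqrt T y⟫_ℂ := fun x y => hs.isSymmetric x y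
  refine ⟨CFC.sqrt T, hsym, fun x => ?_⟩
  rw [hsym]
  conv_lhs => rw [← CFC.sqrt_mul_sqrt_self T hT0]
  rfl

theorem cov_inner {I : Set ℝ} (E : POM (Lp ℂ 2 (volume.restrict I)))
    (hcov : ∀ (a : ℝ) (B : Set ℝ), MeasurableSet B → ∀ φ : Lp ℂ 2 (volume.restrict I),
      mulLp (fun x => Complex.exp (-(Complex.I * a * x)))
        (E.toFun B (mulLp (fun x => Complex.exp (Complex.I * a * x)) φ)) =
      E.toFun ((· + a) '' B) φ) (a : ℝ) {B : Set ℝ} (hB : MeasurableSet B)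
    (φ : Lp ℂ 2 (volume.restrict I)) :
    muE E φ ((· + a) '' B) = ENNReal.ofReal (⟪Um a φ, E.toFun B (Um a φ)⟫_ℂ).re := by
  have hm : MeasurableSet ((· + a) '' B) := (measurableEmbedding_addRight a).measurableSet_image' hB
  rw [muE_apply E φ hm, ← hcov a B hB]
  have h := inner_mulLp (g := fun x : ℝ => Complex.exp (Complex.I * a * x)) (by fun_prop) (C := 1)
    (fun x => (norm_expI a x).le) φ (E.toFun B (Um a φ))
  have e : (fun x : ℝ => starRingEnd ℂ (Complex.exp (Complex.I * a * x))) =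
      fun x : ℝ => Complex.exp (-(Complex.I * a * x)) := by
    funext x
    rw [← Complex.exp_conj]
    simp
  rw [e] at h
  unfold Um at h ⊢
  rw [h]

theorem step {I : Set ℝ} (hI : MeasurableSet I)
    (𝓕 : H2 ≃ₗᵢ[ℂ] H2) (h𝓕 : IsFourier 𝓕)
    (E : POM (Lp ℂ 2 (volume.restrict I)))
    (hcov : ∀ (a : ℝ) (B : Set ℝ), MeasurableSet B → ∀ φ : Lp ℂ 2 (volume.restrict I),
      mulLp (fun x => Complex.exp (-(Complex.I * a * x)))
        (E.toFun B (mulLp (fun x => Complex.exp (Complex.I * a * x)) φ)) =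
      E.toFun ((· + a) '' B) φ) (c : ℝ) (hc : 0 < c) :
    ∃ Ψ, Good I Ψ ∧ ∀ B : Set ℝ, MeasurableSet B → ∀ A : H2 →L[ℂ] H2,
        (∀ φ : H2, A φ = 𝓕 (mulLp (Set.indicator B fun _ => (1 : ℂ)) (𝓕.symm φ))) →
        ∀ φ, ⟪φ, Ψ A φ⟫_ℂ = ((ENNReal.ofReal c⁻¹ *
          ∫⁻ s in Ioc 0 c, muE E φ ((· + s) '' B)).toReal : ℂ) := by
  have : Fact ((2 : ℝ≥0∞) ≠ ∞) := ⟨by norm_num⟩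
  obtain ⟨w, b, hw⟩ := exists_countable_basis (Lp ℂ 2 (volume.restrict I))
  obtain ⟨S, hS1, hS2⟩ := exists_sqrt _ (E.pos (Ioc 0 c))
  have hCm : MeasurableSet (Ioc 0 c) := measurableSet_Ioc
  let h : w → Lp ℂ 2 (volume.restrict I) := fun j => (√(2 * Real.pi * c⁻¹) : ℂ) • S (b j)
  let p : w → Lp ℂ 2 (volume.restrict I) → ℝ → ℝ≥0∞ := fun j φ a =>
    ENNReal.ofReal (2 * Real.pi)⁻¹ * ‖⟪h j, Um a φ⟫_ℂ‖ₑ ^ 2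
  have hpm : ∀ j φ, Measurable (p j φ) := by
    intro j φ
    have : Continuous fun a => ⟪h j, Um a φ⟫_ℂ := continuous_const.inner (Um_continuous φ)
    exact ((this.enorm.measurable.pow_const 2)).const_mul _
  have hp : ∀ j φ a, p j φ a = ENNReal.ofReal c⁻¹ * ‖⟪b j, S (Um a φ)⟫_ℂ‖ₑ ^ 2 := by
    intro j φ a
    simp only [p, h]
    rw [inner_smul_left, hS1, enorm_mul, mul_pow, ← mul_assoc]
    congr 1
    rw [← ofReal_norm, ← ENNReal.ofReal_pow (norm_nonneg _), ← ENNReal.ofReal_mul (by positivity)]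
    congr 1
    rw [RCLike.norm_conj, Complex.norm_real, Real.norm_of_nonneg (Real.sqrt_nonneg _),
      Real.sq_sqrt (by positivity)]
    field_simp
  have hsum : ∀ φ a, ∑' j, p j φ a = ENNReal.ofReal c⁻¹ * muE E φ ((· + a) '' (Ioc 0 c)) := by
    intro φ a
    simp only [hp]
    rw [ENNReal.tsum_mul_left, parseval_tsum, cov_inner E hcov a hCm, hS2]
    congr 1
    have e : (⟪S (Um a φ), S (Um a φ)⟫_ℂ).re = ‖S (Um a φ)‖ ^ 2 :=
      inner_self_eq_norm_sq (𝕜 := ℂ) _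
    rw [e, ENNReal.ofReal_pow (norm_nonneg _), ofReal_norm]
  have hint : ∀ φ (B : Set ℝ), MeasurableSet B → ∑' j, ∫⁻ a in B, p j φ a =
      ENNReal.ofReal c⁻¹ * ∫⁻ s in Ioc 0 c, muE E φ ((· + s) '' B) := by
    intro φ B hB
    rw [← lintegral_tsum fun j => (hpm j φ).aemeasurable]
    simp only [hsum]
    rw [lintegral_const_mul' _ _ ENNReal.ofReal_ne_top, tonelli_shift _ hB hCm]
  have hle : ∀ φ (B : Set ℝ), MeasurableSet B → ∑' j, ∫⁻ a in B, p j φ a ≤ ‖φ‖ₑ ^ 2 := by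
    intro φ B hB
    rw [hint φ B hB]
    calc _ ≤ ENNReal.ofReal c⁻¹ * ∫⁻ s in Ioc 0 c, ‖φ‖ₑ ^ 2 := by
          gcongr
          exact muE_le E φ _
      _ = ‖φ‖ₑ ^ 2 := by
          rw [setLIntegral_const, Real.volume_Ioc, sub_zero, mul_comm, mul_assoc,
            ← ENNReal.ofReal_mul hc.le, mul_inv_cancel₀ hc.ne', ENNReal.ofReal_one, mul_one]
  have hbd : ∀ j, ∀ᵐ x ∂(volume.restrict I), ‖h j x‖ ≤ 1 := by
    intro j
    refine bdd_of_plancherel hI h𝓕 (h j) fun φ => ?_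
    have := (ENNReal.le_tsum j).trans (hle φ univ MeasurableSet.univ)
    simpa only [Measure.restrict_univ] using this
  choose G hG using fun j => exists_G hI (h j) 1 (hbd j)
  have hGn : ∀ j φ, ‖G j φ‖ₑ ^ 2 = ∫⁻ a in univ, p j φ a := by
    intro j φ
    rw [← LinearIsometryEquiv.enorm_map 𝓕.symm, enormsq_L2,
      ← lint_symm hI h𝓕 (h j) φ (G j φ) (hG j φ) univ, Measure.restrict_univ]
  have hGs : ∀ (s : Finset w) φ, ∑ j ∈ s, ‖G j φ‖ ^ 2 ≤ ‖φ‖ ^ 2 := by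
    intro s φ
    have h1 : ∑ j ∈ s, ‖G j φ‖ₑ ^ 2 ≤ ‖φ‖ₑ ^ 2 := by
      simp only [hGn]
      exact (ENNReal.sum_le_tsum s).trans (hle φ univ MeasurableSet.univ)
    simp only [← ofReal_norm, ← ENNReal.ofReal_pow (norm_nonneg _)] at h1
    rw [← ENNReal.ofReal_sum_of_nonneg (fun _ _ => by positivity)] at h1
    exact (ENNReal.ofReal_le_ofReal_iff (by positivity)).1 h1
  choose Φ hΦ hΦi using fun s : Finset w => good_sum s G
    (fun j f hf hb φ => G_comm hI (h j) (G j) (hG j) f hf hb φ) (hGs s)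
  obtain ⟨Ψ, hΨ, hlim⟩ := good_closure atTop Φ hΦ
  refine ⟨Ψ, hΨ, fun B hB A hA φ => hlim A φ _ ?_⟩
  have hfin : ∑' j, ∫⁻ a in B, p j φ a ≠ ∞ := ((hle φ B hB).trans_lt (by simp)).ne
  have hsR := ENNReal.hasSum_toReal hfin
  rw [← ENNReal.tsum_toReal_eq (fun j => ENNReal.ne_top_of_tsum_ne_top hfin j), hint φ B hB] at hsR
  have hsC := Complex.hasSum_ofReal.2 hsR
  refine Tendsto.congr (fun s => ?_) hsC
  rw [hΦi]
  refine Finset.sum_congr rfl fun j _ => ?_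
  rw [inner_A (G j φ) hB A hA, lint_symm hI h𝓕 (h j) φ (G j φ) (hG j φ) B]

theorem avg_tendsto (f : ℝ → ℝ) (hf : Continuous f) (h0 : ∀ s, 0 ≤ f s) :
    Tendsto (fun c : ℝ => (ENNReal.ofReal c⁻¹ * ∫⁻ s in Ioc 0 c, ENNReal.ofReal (f s)).toReal)
      (𝓝[>] 0) (𝓝 (f 0)) := by
  have h1 := ((hf.integral_hasStrictDerivAt 0 0).hasDerivAt).tendsto_slope_zero_right
  refine h1.congr' ?_
  filter_upwards [self_mem_nhdsWithin] with c hc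
  have hc' : 0 < c := hc
  rw [ENNReal.toReal_mul, ENNReal.toReal_ofReal (by positivity),
    ← integral_eq_lintegral_of_nonneg_ae (ae_of_all _ h0) hf.aestronglyMeasurable.restrict]
  simp [intervalIntegral.integral_of_le hc'.le]

end helpers

/-- Structure theorem for covariant POMs: every POM on the Borel sets of `ℝ`
with values in the bounded operators on `L²(I)` satisfying the covariance condition
`e^{-iaM} E(B) e^{iaM} = E(B+a)` is of the form `E(B) = Ψ(F χ_B(M) F*)` for a positive linear
map `Ψ` satisfying `Ψ(f(M)* A f(M)) = f(M)* Ψ(A) f(M)` for all bounded Borel `f`. -/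
theorem statement4 (I : Set ℝ) (hI : MeasurableSet I)
    (𝓕 : H2 ≃ₗᵢ[ℂ] H2) (h𝓕 : IsFourier 𝓕)
    (E : POM (Lp ℂ 2 (volume.restrict I)))
    (hcov : ∀ (a : ℝ) (B : Set ℝ), MeasurableSet B → ∀ φ : Lp ℂ 2 (volume.restrict I),
      mulLp (fun x => Complex.exp (-(Complex.I * a * x)))
        (E.toFun B (mulLp (fun x => Complex.exp (Complex.I * a * x)) φ)) =
      E.toFun ((· + a) '' B) φ) :
    ∃ Ψ : (H2 →L[ℂ] H2) → (Lp ℂ 2 (volume.restrict I) →L[ℂ] Lp ℂ 2 (volume.restrict I)),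
      (∀ A B : H2 →L[ℂ] H2, Ψ (A + B) = Ψ A + Ψ B) ∧
      (∀ (c : ℂ) (A : H2 →L[ℂ] H2), Ψ (c • A) = c • Ψ A) ∧
      (∀ A : H2 →L[ℂ] H2, A.IsPositive → (Ψ A).IsPositive) ∧
      (∀ f : ℝ → ℂ, Measurable f → (∃ C : ℝ, ∀ x : ℝ, ‖f x‖ ≤ C) →
        ∀ A Af : H2 →L[ℂ] H2,
          (∀ φ : H2,
            Af φ = mulLp (fun x => starRingEnd ℂ (f x)) (A (mulLp f φ))) →
          ∀ φ : Lp ℂ 2 (volume.restrict I),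
            Ψ Af φ = mulLp (fun x => starRingEnd ℂ (f x)) (Ψ A (mulLp f φ))) ∧
      (∀ B : Set ℝ, MeasurableSet B → ∀ A : H2 →L[ℂ] H2,
        (∀ φ : H2, A φ = 𝓕 (mulLp (Set.indicator B fun _ => (1 : ℂ)) (𝓕.symm φ))) →
        E.toFun B = Ψ A) := by
  choose Φ hΦ hΦi using fun n : ℕ => step hI 𝓕 h𝓕 E hcov (1 / ((n : ℝ) + 1)) (by positivity)
  obtain ⟨Ψ, hΨ, hlim⟩ := good_closure atTop Φ hΦ
  refine ⟨Ψ, hΨ.add, hΨ.smul, ?_, ?_, ?_⟩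
  · intro A hA
    rw [ContinuousLinearMap.isPositive_iff_complex]
    intro φ
    have h := Complex.nonneg_iff.1 (hΨ.pos A hA φ)
    have e : inner ℂ (Ψ A φ) φ = inner ℂ φ (Ψ A φ) := by
      rw [← inner_conj_symm (Ψ A φ) φ]
      exact Complex.ext (Complex.conj_re _) (by rw [Complex.conj_im, ← h.2, neg_zero])
    rw [e]
    exact ⟨Complex.ext (by simp) (by simp [← h.2]), h.1⟩
  · intro f hf hb A Af h φ
    refine ext_inner_left ℂ fun χ => ?_
    obtain ⟨C, hC⟩ := hb
    rw [hΨ.bim f hf ⟨C, hC⟩ A Af h χ φ, inner_mulLp hf hC]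
  · intro B hB A hA
    have key : ∀ φ, inner ℂ φ (Ψ A φ) = inner ℂ φ (E.toFun B φ) := by
      intro φ
      refine hlim A φ _ ?_
      have hcont : Continuous fun s : ℝ => (inner ℂ (Um s φ) (E.toFun B (Um s φ))).re :=
        Complex.continuous_re.comp
          ((Um_continuous φ).inner ((E.toFun B).continuous.comp (Um_continuous φ)))
      have h1 := avg_tendsto _ hcont (fun s => (pom_inner E B (Um s φ)).2)
      rw [Um_zero] at h1
      have h2 : Tendsto (fun n : ℕ => 1 / ((n : ℝ) + 1)) atTop (nhdsWithin 0 (Ioi 0)) :=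
        tendsto_nhdsWithin_iff.2 ⟨tendsto_one_div_add_atTop_nhds_zero_nat,
          Eventually.of_forall fun n => by
            show (0 : ℝ) < _
            positivity⟩
      have h3 := (Complex.continuous_ofReal.tendsto _).comp (h1.comp h2)
      rw [← (pom_inner E B φ).1] at h3
      refine h3.congr fun n => ?_
      rw [hΦi n B hB A hA φ]
      simp only [Function.comp_apply, cov_inner E hcov _ hB]
    refine ContinuousLinearMap.coe_injective ?_
    refine (ext_inner_map _ _).1 fun φ => ?_
    have := congrArg (starRingEnd ℂ) (key φ)
    simpa only [inner_conj_symm, ContinuousLinearMap.coe_coe] using this.symm
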